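/- arXiv:1906.00763 — 8 statements merged into one kernel-verified Lean document; each statement's English description precedes it below -/
import Mathlib

section
/- Let X be a nominal Perm-set and let ∼ be the least equivalence relation on Sb × X containing (m, g·x) ∼ (m∘g, x) for all m ∈ Sb, g ∈ Perm, x ∈ X, and (m, x) ∼ (m′, x) whenever m|_C = m′|_C for some finite Perm-support C of x. Then (m₁, x₁) ∼ (m₂, x₂) if and only if there exists a permutation g ∈ Perm such that g·x₁ = x₂ and m₁|_C = (m₂∘g)|_C for some finite Perm-support C of x₁. -/
/-!
Write `R (m₁, x₁) (m₂, x₂)` for the right-hand side of the equivalence. Each pair related by `R` is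
related by one `supp` step followed by a reversed `act` step. Conversely `R` contains both kinds of
generators, so it remains to see that `R` is an equivalence relation. Symmetry transports a support
along `g` (`Supports.image`). Transitivity produces two finite supports of the same element, and the
required equation only holds on their intersection; the key fact is therefore that finite
`Perm`-supports are closed under intersection (`Supports.inter`). For this, let `C`, `D` support `x`
and let `m₁`, `m₂` agree on `C ∩ D`. Choose an involution `τ` exchanging `D \ C` with a fresh set of
atoms, on which `m₁`, `m₂` are the identity. Then `τ` is the identity on `C`, so `τ • x = x`, while
`m₁ ∘ τ` and `m₂ ∘ τ` agree on `D`; hence `m₁ • x = m₁ • τ • x = m₂ • τ • x = m₂ • x`.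
-/

/-- The monoid of finitely-supported substitutions of atoms (`𝔸 = ℕ`). -/
def Sb : Submonoid (Function.End ℕ) where
  carrier := {m | {a | m a ≠ a}.Finite}
  one_mem' := by
    have h : {a : ℕ | (1 : Function.End ℕ) a ≠ a} = ∅ := by
      ext a
      simp only [Set.mem_setOf_eq, Set.mem_empty_iff_false, iff_false, not_not]
      rfl
    simp [Set.mem_setOf_eq, h]
  mul_mem' := by
    intro m n hm hn
    refine Set.Finite.subset (Set.Finite.union hm hn) ?_
    intro a ha
    simp only [Set.mem_setOf_eq, Set.mem_union]
    by_contra hcon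
    push_neg at hcon
    apply ha
    show m (n a) = a
    rw [hcon.2, hcon.1]

/-- The group (here: submonoid) of finitely-supported permutations of atoms. -/
def Pm : Submonoid (Function.End ℕ) where
  carrier := {m | {a | m a ≠ a}.Finite ∧ Function.Bijective m}
  one_mem' := ⟨Sb.one_mem, Function.bijective_id⟩
  mul_mem' := by
    intro m n hm hn
    exact ⟨Sb.mul_mem hm.1 hn.1, Function.Bijective.comp hm.2 hn.2⟩

theorem Pm_le_Sb : Pm ≤ Sb := fun _ hm => hm.1

/-- The inclusion of the permutations into the substitutions. -/
def incl : Pm →* Sb := Submonoid.inclusion Pm_le_Sb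

/-- `C` is an `M`-support of `x`. -/
def Supports (M : Submonoid (Function.End ℕ)) {X : Type*} [MulAction M X]
    (C : Set ℕ) (x : X) : Prop :=
  ∀ m₁ m₂ : M, (∀ a ∈ C, m₁.1 a = m₂.1 a) → m₁ • x = m₂ • x

/-- `X` is a nominal `M`-set: every element has a finite `M`-support. -/
def IsNominal (M : Submonoid (Function.End ℕ)) (X : Type*) [MulAction M X] : Prop :=
  ∀ x : X, ∃ C : Set ℕ, C.Finite ∧ Supports M C x

/-- The `Perm`-action on an `Sb`-set, obtained by restriction. -/
instance (priority := 100) permActionOfSb {X : Type*} [MulAction Sb X] : MulAction Pm X :=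
  MulAction.compHom X incl

/-- The generating relation for the quotient defining `F(X)`:
`(m, g • x) ∼ (m ∘ g, x)` for permutations `g`, and `(m, x) ∼ (m', x)` whenever
`m` and `m'` agree on some finite `Perm`-support `C` of `x`. -/
inductive FGen (X : Type*) [MulAction Pm X] : Sb × X → Sb × X → Prop
  | act (m : Sb) (g : Pm) (x : X) : FGen X (m, g • x) (m * incl g, x)
  | supp (m m' : Sb) (x : X) (C : Set ℕ) (hC : C.Finite) (hs : Supports Pm C x)
      (h : ∀ a ∈ C, m.1 a = m'.1 a) : FGen X (m, x) (m', x)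

theorem Pm.exists_inv (g : Pm) : ∃ h : Pm, h * g = 1 ∧ g * h = 1 := by
  obtain ⟨g, hfin, hbij⟩ := g
  let e : ℕ ≃ ℕ := Equiv.ofBijective g hbij
  have hge : ∀ a, g (e.symm a) = a := e.apply_symm_apply
  have heg : ∀ a, e.symm (g a) = a := e.symm_apply_apply
  refine ⟨⟨(fun a => e.symm a : ℕ → ℕ), ?_, e.symm.bijective⟩, ?_, ?_⟩
  · refine hfin.subset fun a ha h => ha ?_
    have := heg a
    rwa [h] at this
  · exact Subtype.ext (funext heg)
  · exact Subtype.ext (funext hge)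

theorem Supports.image {X : Type*} [MulAction Pm X] {C : Set ℕ} {x : X}
    (hs : Supports Pm C x) (g : Pm) : Supports Pm (g.1 '' C) (g • x) := by
  intro m₁ m₂ h
  rw [← mul_smul, ← mul_smul]
  exact hs _ _ fun a ha => h _ ⟨a, ha, rfl⟩

/-- A finite set `E` of atoms below `N` can be exchanged with its translate `E + N` by a
finitely supported permutation fixing all other atoms. -/
theorem Pm.exists_shift (E : Set ℕ) (N : ℕ) (hE : ∀ a ∈ E, a < N) :
    ∃ t : Pm, (∀ a ∈ E, t.1 a = a + N) ∧ ∀ a < N, a ∉ E → t.1 a = a := by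
  classical
  let f : ℕ → ℕ := fun a =>
    if a ∈ E then a + N else if N ≤ a ∧ a - N ∈ E then a - N else a
  have hf : Function.Involutive f := by
    intro a
    have h₁ := hE a
    have h₂ := hE (a - N)
    have h₃ := hE (a + N)
    simp only [f]
    grind
  refine ⟨⟨f, ?_, hf.bijective⟩, ?_, ?_⟩
  · refine (Set.finite_lt_nat (N + N)).subset fun a ha => ?_
    by_contra hlt
    apply ha
    have h₁ := hE a
    have h₂ := hE (a - N)
    simp only [Set.mem_ofPred_eq] at hlt
    simp only [f]
    grind
  · intro a ha
    exact if_pos ha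
  · intro a ha haE
    change f a = a
    simp only [f]
    grind

theorem Supports.inter {X : Type*} [MulAction Pm X] {C D : Set ℕ} {x : X}
    (hC : C.Finite) (hD : D.Finite) (hsC : Supports Pm C x) (hsD : Supports Pm D x) :
    Supports Pm (C ∩ D) x := by
  intro m₁ m₂ h
  -- All atoms at or above `N` lie outside `C ∪ D` and are fixed by `m₁` and `m₂`.
  obtain ⟨M, hM⟩ := (((hC.union hD).union m₁.2.1).union m₂.2.1).bddAbove
  obtain ⟨N, hN⟩ : ∃ N, N = M + 1 := ⟨_, rfl⟩
  have hlt : ∀ a ∈ C ∪ D, a < N := fun a ha => by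
    have := hM (Or.inl (Or.inl ha))
    omega
  have hm₁ : ∀ a, N ≤ a → m₁.1 a = a := fun a ha => by
    by_contra hne
    have := hM (Or.inl (Or.inr hne))
    omega
  have hm₂ : ∀ a, N ≤ a → m₂.1 a = a := fun a ha => by
    by_contra hne
    have := hM (Or.inr hne)
    omega
  obtain ⟨t, ht, ht'⟩ := Pm.exists_shift (D \ C) N fun a ha => hlt a (Or.inr ha.1)
  have htx : t • x = x := by
    have := hsC t 1 fun a ha => ht' a (hlt a (Or.inl ha)) fun h' => h'.2 ha
    rwa [one_smul] at this
  have key : (m₁ * t) • x = (m₂ * t) • x := by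
    refine hsD _ _ fun a ha => ?_
    change m₁.1 (t.1 a) = m₂.1 (t.1 a)
    by_cases haC : a ∈ C
    · rw [ht' a (hlt a (Or.inr ha)) fun h' => h'.2 haC]
      exact h a ⟨haC, ha⟩
    · rw [ht a ⟨ha, haC⟩, hm₁ _ (Nat.le_add_left _ _), hm₂ _ (Nat.le_add_left _ _)]
  rwa [mul_smul, mul_smul, htx] at key

/-- The explicit description of the generated equivalence relation, as a relation on pairs. -/
def PermRel (X : Type*) [MulAction Pm X] (p q : Sb × X) : Prop :=
  ∃ g : Pm, g • p.2 = q.2 ∧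
    ∃ C : Set ℕ, C.Finite ∧ Supports Pm C p.2 ∧ ∀ a ∈ C, p.1.1 a = q.1.1 (g.1 a)

theorem PermRel.refl {X : Type*} [MulAction Pm X] (hX : IsNominal Pm X) (p : Sb × X) :
    PermRel X p p := by
  obtain ⟨C, hC, hs⟩ := hX p.2
  exact ⟨1, one_smul _ _, C, hC, hs, fun a _ => rfl⟩

theorem PermRel.symm {X : Type*} [MulAction Pm X] {p q : Sb × X} (h : PermRel X p q) :
    PermRel X q p := by
  obtain ⟨g, hg, C, hC, hs, hm⟩ := h
  obtain ⟨k, hkg, -⟩ := Pm.exists_inv g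
  refine ⟨k, ?_, g.1 '' C, hC.image _, ?_, ?_⟩
  · rw [← hg, ← mul_smul, hkg, one_smul]
  · rw [← hg]
    exact hs.image g
  · rintro _ ⟨a, ha, rfl⟩
    have hka : k.1 (g.1 a) = a := congrFun (congrArg Subtype.val hkg) a
    rw [hka, hm a ha]

theorem PermRel.trans {X : Type*} [MulAction Pm X] {p q r : Sb × X} (h₁ : PermRel X p q)
    (h₂ : PermRel X q r) : PermRel X p r := by
  obtain ⟨g, hg, C, hC, hsC, hmC⟩ := h₁
  obtain ⟨h, hh, D, hD, hsD, hmD⟩ := h₂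
  obtain ⟨k, hkg, hgk⟩ := Pm.exists_inv g
  have hsD' : Supports Pm (k.1 '' D) p.2 := by
    have := hsD.image k
    rwa [← hg, ← mul_smul, hkg, one_smul] at this
  refine ⟨h * g, by rw [mul_smul, hg, hh], C ∩ k.1 '' D, hC.inter_of_left _,
    hsC.inter hC (hD.image _) hsD', ?_⟩
  rintro _ ⟨haC, d, hd, rfl⟩
  have hgd : g.1 (k.1 d) = d := congrFun (congrArg Subtype.val hgk) d
  change _ = r.1.1 (h.1 (g.1 (k.1 d)))
  rw [hmC _ haC, hgd, hmD d hd]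

theorem FGen.permRel {X : Type*} [MulAction Pm X] (hX : IsNominal Pm X) {p q : Sb × X}
    (h : FGen X p q) : PermRel X p q := by
  cases h with
  | act m g x =>
    obtain ⟨C, hC, hs⟩ := hX x
    exact PermRel.symm ⟨g, rfl, C, hC, hs, fun a _ => rfl⟩
  | supp m m' x C hC hs h => exact ⟨1, one_smul _ _, C, hC, hs, h⟩

/-- Let `X` be a nominal `Perm`-set and let `∼` be the least equivalence
relation on `Sb × X` generated by `FGen`. Then `(m₁, x₁) ∼ (m₂, x₂)` iff there is a
permutation `g` with `g • x₁ = x₂` and `m₁|_C = (m₂ ∘ g)|_C` for some finite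
`Perm`-support `C` of `x₁`. -/
theorem eqvGen_iff_exists_perm {X : Type*} [MulAction Pm X] (hX : IsNominal Pm X)
    (m₁ m₂ : Sb) (x₁ x₂ : X) :
    Relation.EqvGen (FGen X) (m₁, x₁) (m₂, x₂) ↔
      ∃ g : Pm, g • x₁ = x₂ ∧
        ∃ C : Set ℕ, C.Finite ∧ Supports Pm C x₁ ∧
          ∀ a ∈ C, m₁.1 a = (m₂ * incl g).1 a := by
  constructor
  · intro h
    have hR : PermRel X (m₁, x₁) (m₂, x₂) := by
      generalize (m₁, x₁) = p, (m₂, x₂) = q at h ⊢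
      induction h with
      | rel p q h => exact h.permRel hX
      | refl p => exact PermRel.refl hX p
      | symm p q _ ih => exact ih.symm
      | trans p q r _ _ ih₁ ih₂ => exact ih₁.trans ih₂
    exact hR
  · rintro ⟨g, rfl, C, hC, hs, hm⟩
    exact .trans _ _ _ (.rel _ _ (.supp m₁ (m₂ * incl g) x₁ C hC hs hm))
      (.symm _ _ (.rel _ _ (.act m₂ g x₁)))
end

section
/- Let X be a nominal Perm-set and let F(X) = (Sb × X)/∼ with equivalence classes written [m, x]. Then the operation n·[m, x] = [n∘m, x] is a well-defined Sb-action on F(X), and F(X) is a nominal Sb-set; moreover, if C is a finite Perm-support of x, then the image m·C is an Sb-support of [m, x]. -/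
/-- The free nominal `Sb`-set over a nominal `Perm`-set: `F(X) = (Sb × X)/∼`. -/
def FObj (X : Type*) [MulAction Pm X] : Type _ := Quot (FGen X)

/-- The equivalence class `[m, x]`. -/
def FElt {X : Type*} [MulAction Pm X] (m : Sb) (x : X) : FObj X :=
  Quot.mk (FGen X) (m, x)

/-- The `Sb`-action on `F(X)`: `n • [m, x] = [n * m, x]`. -/
instance FObj.instMulAction (X : Type*) [MulAction Pm X] : MulAction Sb (FObj X) where
  smul n := Quot.lift (fun p => FElt (n * p.1) p.2) (by
    intro p q h
    cases h with
    | act m g x =>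
        show FElt (n * m) (g • x) = FElt (n * (m * incl g)) x
        rw [← mul_assoc]
        exact Quot.sound (FGen.act (n * m) g x)
    | supp m m' x C hC hs hag =>
        show FElt (n * m) x = FElt (n * m') x
        exact Quot.sound (FGen.supp (n * m) (n * m') x C hC hs (fun a ha => by
          show n.1 (m.1 a) = n.1 (m'.1 a)
          rw [hag a ha])))
  one_smul := by
    intro p
    induction p using Quot.ind with
    | _ p => show FElt (1 * p.1) p.2 = FElt p.1 p.2; rw [one_mul]
  mul_smul := by
    intro n n' p
    induction p using Quot.ind with
    | _ p =>
      show FElt (n * n' * p.1) p.2 = FElt (n * (n' * p.1)) p.2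
      rw [mul_assoc]

theorem FObj.smul_def {X : Type*} [MulAction Pm X] (n m : Sb) (x : X) :
    n • (FElt m x) = FElt (n * m) x := rfl
/-- If `n₁` and `n₂` agree on `m · C`, then `n₁ ∘ m` and `n₂ ∘ m` agree on `C`, so the second
generator of `∼` identifies `[n₁ ∘ m, x]` with `[n₂ ∘ m, x]`. -/
theorem supports_image_FElt {X : Type*} [MulAction Pm X] (m : Sb) (x : X) (C : Set ℕ)
    (hC : C.Finite) (hs : Supports Pm C x) : Supports Sb (m.1 '' C) (FElt m x) := by
  intro n₁ n₂ h
  rw [FObj.smul_def, FObj.smul_def]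
  exact Quot.sound (FGen.supp (n₁ * m) (n₂ * m) x C hC hs
    fun a ha => h (m.1 a) (Set.mem_image_of_mem _ ha))

/-- For a nominal `Perm`-set `X`, the operation `n • [m, x] = [n ∘ m, x]`
is a well-defined `Sb`-action on `F(X) = (Sb × X)/∼`; `F(X)` is a nominal `Sb`-set; and
if `C` is a finite `Perm`-support of `x`, then the image `m · C` is an `Sb`-support of
`[m, x]`. -/
theorem FObj_action_welldefined_and_nominal {X : Type*} [MulAction Pm X]
    (hX : IsNominal Pm X) :
    (∃ act : Sb → FObj X → FObj X,
      (∀ (n m : Sb) (x : X), act n (FElt m x) = FElt (n * m) x) ∧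
      (∀ p : FObj X, act 1 p = p) ∧
      (∀ (n n' : Sb) (p : FObj X), act (n * n') p = act n (act n' p))) ∧
    IsNominal Sb (FObj X) ∧
    (∀ (m : Sb) (x : X) (C : Set ℕ), C.Finite → Supports Pm C x →
      Supports Sb (m.1 '' C) (FElt m x)) := by
  refine ⟨⟨fun n p => n • p, FObj.smul_def, one_smul Sb, mul_smul⟩, ?_, supports_image_FElt⟩
  intro p
  induction p using Quot.ind with
  | _ p =>
    obtain ⟨m, x⟩ := p
    obtain ⟨C, hC, hs⟩ := hX x
    exact ⟨m.1 '' C, hC.image _, supports_image_FElt m x C hC hs⟩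
end

section
/- Let X, Y be nominal Perm-sets and let f : X → Y be Perm-equivariant. Then F(f)([m, x]) = [m, f(x)] is a well-defined Sb-equivariant map F(X) → F(Y); moreover F preserves identity maps and composition, so F is a functor from nominal Perm-sets to nominal Sb-sets. -/
/-- `M`-equivariance of a function between `M`-sets. -/
def Equivariant (M : Submonoid (Function.End ℕ)) {X Y : Type*} [MulAction M X]
    [MulAction M Y] (f : X → Y) : Prop :=
  ∀ (m : M) (x : X), f (m • x) = m • f x

/-- Equivariant maps do not enlarge supports. -/
theorem Equivariant.supports {M : Submonoid (Function.End ℕ)} {X Y : Type*} [MulAction M X]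
    [MulAction M Y] {f : X → Y} (hf : Equivariant M f) {C : Set ℕ} {x : X}
    (hC : Supports M C x) : Supports M C (f x) := by
  intro m₁ m₂ h
  rw [← hf, ← hf, hC m₁ m₂ h]

/-- The map `F(f) : F(X) → F(Y)`, `[m, x] ↦ [m, f x]`, induced by a `Perm`-equivariant `f`. -/
def FMap {X Y : Type*} [MulAction Pm X] [MulAction Pm Y] (f : X → Y) (hf : Equivariant Pm f) :
    FObj X → FObj Y :=
  Quot.lift (fun p => FElt p.1 (f p.2)) (by
    intro p q h
    cases h with
    | act m g x =>
        show FElt m (f (g • x)) = FElt (m * incl g) (f x)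
        rw [hf]
        exact Quot.sound (FGen.act m g (f x))
    | supp m m' x C hC hs hag =>
        exact Quot.sound (FGen.supp m m' (f x) C hC (hf.supports hs) hag))

/-- For nominal `Perm`-sets `X, Y, Z` and `Perm`-equivariant maps
`f : X → Y` and `f' : Y → Z`: the assignment `F(f)([m, x]) = [m, f x]` yields a
well-defined `Sb`-equivariant map `F(X) → F(Y)`; it is uniquely determined by this
formula; and `F` preserves identities and composition, so `F` is a functor from nominal
`Perm`-sets to nominal `Sb`-sets. -/
theorem FMap_welldefined_equivariant_functorial {X Y Z : Type*}
    [MulAction Pm X] [MulAction Pm Y] [MulAction Pm Z]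
    (hX : IsNominal Pm X) (hY : IsNominal Pm Y) (hZ : IsNominal Pm Z)
    (f : X → Y) (hf : Equivariant Pm f) (f' : Y → Z) (hf' : Equivariant Pm f') :
    ∃ Ff : FObj X → FObj Y,
      (∀ (m : Sb) (x : X), Ff (FElt m x) = FElt m (f x)) ∧
      Equivariant Sb Ff ∧
      (∀ Ff₀ : FObj X → FObj Y, (∀ (m : Sb) (x : X), Ff₀ (FElt m x) = FElt m (f x)) →
        Ff₀ = Ff) ∧
      (∃ Fid : FObj X → FObj X,
        (∀ (m : Sb) (x : X), Fid (FElt m x) = FElt m x) ∧ Fid = id) ∧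
      (∃ (Ff' : FObj Y → FObj Z) (Fcomp : FObj X → FObj Z),
        (∀ (m : Sb) (y : Y), Ff' (FElt m y) = FElt m (f' y)) ∧
        (∀ (m : Sb) (x : X), Fcomp (FElt m x) = FElt m (f' (f x))) ∧
        Fcomp = Ff' ∘ Ff) := by
  refine ⟨FMap f hf, fun _ _ => rfl, ?_, ?_, ⟨id, fun _ _ => rfl, rfl⟩,
    FMap f' hf', FMap f' hf' ∘ FMap f hf, fun _ _ => rfl, fun _ _ => rfl, rfl⟩
  · rintro n ⟨m, x⟩
    rfl
  · intro G hG
    funext p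
    obtain ⟨m, x⟩ := p
    exact hG m x
end

section
/- Let X be a nominal Perm-set and Y a nominal Sb-set, and let f : X → U(Y) be a Perm-equivariant map, where U(Y) is Y with its Perm-action obtained by restriction. Then there exists a unique Sb-equivariant map f♯ : F(X) → Y such that f♯([id, x]) = f(x) for all x ∈ X; it is given by f♯([m, x]) = m·f(x). Consequently F is left adjoint to the forgetful functor U : sbNom → permNom. -/
/-- A subset `S` of a finite set `T` can be moved off `T` by a finitely supported permutation
that fixes every element of `T` outside `S`. -/
theorem exists_fresh_perm (S T : Set ℕ) (hT : T.Finite) (hST : S ⊆ T) :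
    ∃ g : Pm, (∀ a ∈ T, a ∉ S → g.1 a = a) ∧ ∀ a ∈ S, g.1 a ∉ T := by
  classical
  obtain ⟨B, hB⟩ := hT.bddAbove
  obtain ⟨N, hN⟩ : ∃ N : ℕ, ∀ a ∈ T, a < N := ⟨B + 1, fun a ha => Nat.lt_succ_of_le (hB ha)⟩
  have hS : ∀ a ∈ S, a < N := fun a ha => hN a (hST ha)
  -- The involution exchanging `a` and `a + N` for `a ∈ S`; everything in `T` lies below `N`.
  let g : ℕ → ℕ := fun a => if a ∈ S then a + N else if N ≤ a ∧ a - N ∈ S then a - N else a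
  have hmem : ∀ a ∈ S, g a = a + N := fun a ha => if_pos ha
  have hfix : ∀ a, a ∉ S → ¬ (N ≤ a ∧ a - N ∈ S) → g a = a := fun a h₁ h₂ => by
    simp only [g, if_neg h₁, if_neg h₂]
  have hback : ∀ a ∈ S, g (a + N) = a := fun a ha => by
    have h₁ : a + N ∉ S := fun h => by have := hS _ h; omega
    have h₂ : N ≤ a + N ∧ a + N - N ∈ S := ⟨by omega, by simpa using ha⟩
    simp only [g, if_neg h₁, if_pos h₂]
    omega
  have hinv : Function.Involutive g := fun a => by
    by_cases h₁ : a ∈ S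
    · rw [hmem a h₁, hback a h₁]
    by_cases h₂ : N ≤ a ∧ a - N ∈ S
    · obtain ⟨b, rfl⟩ := Nat.exists_eq_add_of_le' h₂.1
      have hb : b ∈ S := by simpa using h₂.2
      rw [hback b hb, hmem b hb]
    · rw [hfix a h₁ h₂, hfix a h₁ h₂]
  have hfin : {a | g a ≠ a}.Finite := by
    refine (Set.finite_lt_nat (N + N)).subset fun a ha => ?_
    by_contra hlt
    have hle : N + N ≤ a := not_lt.mp hlt
    exact ha (hfix a (fun h => by have := hS _ h; omega)
      (fun h => by have := hS _ h.2; omega))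
  refine ⟨⟨g, hfin, hinv.bijective⟩, fun a ha haS => ?_, fun a ha hgT => ?_⟩
  · exact hfix a haS fun h => by have := hN a ha; omega
  · have h₁ : g a < N := hN _ hgT
    rw [hmem a ha] at h₁
    omega

/-- In a nominal `Sb`-set, every finite `Perm`-support is an `Sb`-support. Given `m₁`, `m₂`
agreeing on `C`, and a finite `Sb`-support `D` of `y`, a permutation `g` that fixes `C` and moves
`D \ C` to atoms untouched by `m₁` and `m₂` satisfies `g • y = y`, while `m₁ * g` and `m₂ * g`
agree on `D`. -/
theorem Supports.perm_to_sb {Y : Type*} [MulAction Sb Y] (hY : IsNominal Sb Y) {C : Set ℕ}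
    (hC : C.Finite) {y : Y} (hs : Supports Pm C y) : Supports Sb C y := by
  intro m₁ m₂ hag
  obtain ⟨D, hD, hDs⟩ := hY y
  have hm₁ : {a | m₁.1 a ≠ a}.Finite := m₁.2
  have hm₂ : {a | m₂.1 a ≠ a}.Finite := m₂.2
  obtain ⟨g, hgfix, hgfresh⟩ := exists_fresh_perm (D \ C)
    (C ∪ D ∪ ({a | m₁.1 a ≠ a} ∪ {a | m₂.1 a ≠ a})) ((hC.union hD).union (hm₁.union hm₂))
    (fun a ha => Or.inl (Or.inr ha.1))
  have hgC : ∀ a ∈ C, g.1 a = a := fun a ha =>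
    hgfix a (Or.inl (Or.inl ha)) (fun h => h.2 ha)
  have hgy : incl g • y = y := by
    have h : g • y = (1 : Pm) • y := hs g 1 hgC
    rw [one_smul] at h
    exact h
  have key : (m₁ * incl g) • y = (m₂ * incl g) • y := by
    refine hDs _ _ fun a ha => ?_
    show m₁.1 (g.1 a) = m₂.1 (g.1 a)
    by_cases haC : a ∈ C
    · rw [hgC a haC, hag a haC]
    · have hfresh := hgfresh a ⟨ha, haC⟩
      have h₁ : m₁.1 (g.1 a) = g.1 a := by
        by_contra h
        exact hfresh (Or.inr (Or.inl h))
      have h₂ : m₂.1 (g.1 a) = g.1 a := by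
        by_contra h
        exact hfresh (Or.inr (Or.inr h))
      rw [h₁, h₂]
  rwa [mul_smul, mul_smul, hgy] at key

theorem Supports.map {X Y : Type*} [MulAction Pm X] [MulAction Pm Y] {f : X → Y}
    (hf : Equivariant Pm f) {C : Set ℕ} {x : X} (hs : Supports Pm C x) :
    Supports Pm C (f x) := fun m₁ m₂ h => by
  rw [← hf, ← hf, hs m₁ m₂ h]

/-- The map `f♯ : F(X) → Y`, `[m, x] ↦ m • f x`, induced by a `Perm`-equivariant `f : X → Y`. -/
def FObj.lift {X Y : Type*} [MulAction Pm X] [MulAction Sb Y] (hY : IsNominal Sb Y)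
    (f : X → Y) (hf : Equivariant Pm f) : FObj X → Y :=
  Quot.lift (fun p => p.1 • f p.2) (by
    intro p q h
    cases h with
    | act m g x =>
        show m • f (g • x) = (m * incl g) • f x
        rw [hf, mul_smul]
        rfl
    | supp m m' x C hC hs hag =>
        exact (hs.map hf).perm_to_sb hY hC m m' hag)

/-- Let `X` be a nominal `Perm`-set, `Y` a nominal `Sb`-set, and
`f : X → U(Y)` a `Perm`-equivariant map (for the restricted `Perm`-action on `Y`).
Then there is a unique `Sb`-equivariant map `f♯ : F(X) → Y` with `f♯([id, x]) = f x`
for all `x`, and it is given by `f♯([m, x]) = m • f x`. This is the universal property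
exhibiting `F` as left adjoint to the forgetful functor `U : sbNom → permNom`. -/
theorem FObj_universal_property {X Y : Type*} [MulAction Pm X] [MulAction Sb Y]
    (hX : IsNominal Pm X) (hY : IsNominal Sb Y)
    (f : X → Y) (hf : Equivariant Pm f) :
    (∃! fs : FObj X → Y, Equivariant Sb fs ∧ ∀ x : X, fs (FElt 1 x) = f x) ∧
    (∀ fs : FObj X → Y, Equivariant Sb fs → (∀ x : X, fs (FElt 1 x) = f x) →
      ∀ (m : Sb) (x : X), fs (FElt m x) = m • f x) := by
  have formula : ∀ fs : FObj X → Y, Equivariant Sb fs → (∀ x : X, fs (FElt 1 x) = f x) →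
      ∀ (m : Sb) (x : X), fs (FElt m x) = m • f x := by
    intro fs hfs h1 m x
    rw [← h1 x, ← hfs, FObj.smul_def, mul_one]
  refine ⟨⟨FObj.lift hY f hf, ⟨?_, fun x => one_smul Sb (f x)⟩, ?_⟩, formula⟩
  · intro n p
    induction p using Quot.ind with
    | _ p => exact mul_smul n p.1 (f p.2)
  · rintro fs ⟨hfs, h1⟩
    funext p
    induction p using Quot.ind with
    | _ p => exact formula fs hfs h1 p.1 p.2
end

section
/- Let X be a nominal Perm-set with dim(X) ≤ 1, i.e., every element of X has a support of cardinality at most 1. Then the unit map η : X → UF(X), η(x) = [id, x], is a Perm-equivariant bijection (an isomorphism of nominal Perm-sets). -/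
/-- The transposition of two atoms, as an element of `Pm`. -/
def swapPm (a b : ℕ) : Pm :=
  ⟨fun c => Equiv.swap a b c, by
    refine Set.Finite.subset (Set.toFinite {a, b}) ?_
    intro c hc
    by_contra hcon
    simp only [Set.mem_insert_iff, Set.mem_singleton_iff, not_or] at hcon
    exact hc (Equiv.swap_apply_of_ne_of_ne hcon.1 hcon.2), (Equiv.swap a b).bijective⟩

theorem swapPm_apply (a b c : ℕ) : (swapPm a b).1 c = Equiv.swap a b c := rfl

theorem Pm.mul_apply (g h : Pm) (c : ℕ) : (g * h).1 c = g.1 (h.1 c) := rfl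

theorem exists_perm_agree {C : Set ℕ} (hC : C.Subsingleton) (m : Sb) :
    ∃ g : Pm, ∀ a ∈ C, g.1 a = m.1 a := by
  rcases hC.eq_empty_or_singleton with rfl | ⟨a, rfl⟩
  · exact ⟨1, by simp⟩
  · refine ⟨swapPm a (m.1 a), ?_⟩
    rintro b rfl
    exact Equiv.swap_apply_left _ _

/-- If `d` lies outside the support `C` of `x`, the value of a permutation at `d` can be moved to
any atom `f` fresh for the image of `C`, without changing the effect on `x`. -/
theorem exists_smul_eq_and_apply_eq {X : Type*} [MulAction Pm X] {x : X} {C : Set ℕ}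
    (hs : Supports Pm C x) {d : ℕ} (hd : d ∉ C) (g : Pm) {f : ℕ} (hf : f ∉ g.1 '' C) :
    ∃ k : Pm, k • x = g • x ∧ k.1 d = f := by
  refine ⟨swapPm (g.1 d) f * g, hs _ _ ?_, ?_⟩
  · intro a ha
    rw [Pm.mul_apply, swapPm_apply]
    refine Equiv.swap_apply_of_ne_of_ne ?_ ?_
    · intro h
      exact hd (g.2.2.1 h ▸ ha)
    · rintro h
      exact hf ⟨a, ha, h⟩
  · exact Equiv.swap_apply_left _ _

/-- The intersection of a finite support with a support having at most one atom is a support. -/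
theorem supports_inter {X : Type*} [MulAction Pm X] {x : X} {C D : Set ℕ}
    (hC : C.Finite) (hsC : Supports Pm C x) (hD : D.Subsingleton) (hsD : Supports Pm D x) :
    Supports Pm (C ∩ D) x := by
  intro g g' h
  by_cases hsub : D ⊆ C
  · exact hsD _ _ fun a ha => h a ⟨hsub ha, ha⟩
  · obtain ⟨d, hdD, hdC⟩ := Set.not_subset.1 hsub
    obtain ⟨f, hf⟩ := ((hC.image g.1).union (hC.image g'.1)).exists_notMem
    rw [Set.mem_union, not_or] at hf
    obtain ⟨k, hk, hkd⟩ := exists_smul_eq_and_apply_eq hsC hdC g hf.1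
    obtain ⟨k', hk', hkd'⟩ := exists_smul_eq_and_apply_eq hsC hdC g' hf.2
    rw [← hk, ← hk']
    refine hsD _ _ fun a ha => ?_
    rw [hD ha hdD, hkd, hkd']

theorem Supports.smul_image {X : Type*} [MulAction Pm X] {x : X} {D : Set ℕ}
    (hs : Supports Pm D x) (g : Pm) : Supports Pm (g.1 '' D) (g • x) := by
  intro m₁ m₂ h
  rw [← mul_smul, ← mul_smul]
  exact hs _ _ fun a ha => h _ ⟨a, ha, rfl⟩

/-- If every element of `X` has a support with at most one atom, the unit `X → F(X)` has a
retraction, sending `[m, x]` to `g • x` for a permutation `g` agreeing with `m` on such a support. -/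
theorem exists_retract {X : Type*} [MulAction Pm X]
    (hdim : ∀ x : X, ∃ C : Set ℕ, C.Subsingleton ∧ Supports Pm C x) :
    ∃ r : FObj X → X, ∀ x : X, r (FElt 1 x) = x := by
  choose D hD hsD using hdim
  choose p hp using fun (m : Sb) (x : X) => exists_perm_agree (hD x) m
  refine ⟨Quot.lift (fun q => p q.1 q.2 • q.2) ?_, ?_⟩
  · intro q q' h
    cases h with
    | act m g x =>
      show p m (g • x) • g • x = p (m * incl g) x • x
      have hgD : (g.1 '' D x).Subsingleton := (hD x).image _
      obtain ⟨l, hl⟩ := exists_perm_agree hgD m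
      have h₁ : p m (g • x) • g • x = l • g • x := by
        refine supports_inter (hD (g • x)).finite (hsD _) hgD
          ((hsD x).smul_image g) _ _ fun a ha => ?_
        rw [hp _ _ a ha.1, hl a ha.2]
      rw [h₁, ← mul_smul]
      refine hsD x _ _ fun a ha => ?_
      rw [hp _ _ a ha]
      exact hl _ ⟨a, ha, rfl⟩
    | supp m m' x C hC hs hag =>
      refine supports_inter hC hs (hD x) (hsD x) _ _ fun a ha => ?_
      rw [hp _ _ a ha.2, hp _ _ a ha.2, hag a ha.1]
  · intro x
    show p 1 x • x = x
    conv_rhs => rw [← one_smul Pm x]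
    exact hsD x _ _ fun a ha => hp _ _ a ha

/-- Let `X` be a nominal `Perm`-set with `dim(X) ≤ 1`, i.e. every
element has a support with at most one atom. Then the unit `η : X → UF(X)`,
`η x = [id, x]`, is a `Perm`-equivariant bijection (an isomorphism of nominal
`Perm`-sets, where `UF(X)` carries the `Perm`-action restricting the `Sb`-action). -/
theorem unit_bijective_of_dim_le_one {X : Type*} [MulAction Pm X]
    (hX : IsNominal Pm X)
    (hdim : ∀ x : X, ∃ C : Set ℕ, C.Subsingleton ∧ Supports Pm C x) :
    Function.Bijective (fun x : X => FElt (1 : Sb) x) ∧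
    (∀ (g : Pm) (x : X), FElt (1 : Sb) (g • x) = incl g • FElt (1 : Sb) x) := by
  refine ⟨⟨?_, ?_⟩, ?_⟩
  · obtain ⟨r, hr⟩ := exists_retract hdim
    exact Function.LeftInverse.injective (g := r) hr
  · intro q
    induction q using Quot.ind with
    | _ q =>
      obtain ⟨m, x⟩ := q
      obtain ⟨D, hD, hsD⟩ := hdim x
      obtain ⟨g, hg⟩ := exists_perm_agree hD m
      refine ⟨g • x, ?_⟩
      refine (Quot.sound (FGen.act 1 g x)).trans ?_
      rw [one_mul]
      exact Quot.sound (FGen.supp _ _ x D hD.finite hsD hg)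
  · intro g x
    rw [FObj.smul_def, mul_one]
    refine (Quot.sound (FGen.act 1 g x)).trans ?_
    rw [one_mul]
    rfl
end

section
/- Let Y be a nominal Sb-set and let y ∈ Y be supported by a singleton set or by the empty set. Then {m·y | m ∈ Sb} = {g·y | g ∈ Perm}. -/
/-- Let `Y` be a nominal `Sb`-set and let `y ∈ Y` be supported by a
singleton set or by the empty set (i.e. by a subsingleton set of atoms). Then
`{m · y | m ∈ Sb} = {g · y | g ∈ Perm}`. -/
theorem sb_orbit_eq_perm_orbit {Y : Type*} [MulAction Sb Y] (hY : IsNominal Sb Y)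
    (y : Y) (C : Set ℕ) (hC : C.Subsingleton) (hs : Supports Sb C y) :
    {z : Y | ∃ m : Sb, z = m • y} = {z : Y | ∃ g : Pm, z = incl g • y} := by
  ext z
  constructor
  · rintro ⟨m, rfl⟩
    rcases hC.eq_empty_or_singleton with rfl | ⟨c, rfl⟩
    · exact ⟨1, hs _ _ (by simp)⟩
    · -- `m` agrees on `{c}` with the transposition of `c` and `m c`.
      have hfin : {a | Equiv.swap c (m.1 c) a ≠ a}.Finite := by
        refine (Set.toFinite {c, m.1 c}).subset fun a ha => ?_
        by_contra hcon
        simp only [Set.mem_insert_iff, Set.mem_singleton_iff, not_or] at hcon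
        exact ha (Equiv.swap_apply_of_ne_of_ne hcon.1 hcon.2)
      refine ⟨⟨fun a => Equiv.swap c (m.1 c) a, hfin, (Equiv.swap c (m.1 c)).bijective⟩, hs _ _ ?_⟩
      rintro a rfl
      exact (Equiv.swap_apply_left a (m.1 a)).symm
  · rintro ⟨g, rfl⟩
    exact ⟨incl g, rfl⟩
end

section
/- Let M ∈ {Perm, Sb} and let X be a nominal M-set. Then dim(X) ≤ 1 if and only if there exist sets Y and I such that X is isomorphic, as an M-set, to Y + ∐_{i ∈ I} 𝔸, where Y carries the trivial M-action and each summand 𝔸 carries the action m·a = m(a). -/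
/-- The transposition of the atoms `a` and `b`, as an element of a monoid containing `Perm`. -/
def swapEnd {M : Submonoid (Function.End ℕ)} (hM : Pm ≤ M) (a b : ℕ) : M :=
  ⟨(Equiv.swap a b : ℕ → ℕ), hM ⟨by
    refine Set.Finite.subset (Set.toFinite {a, b}) fun c hc => ?_
    by_contra h
    simp only [Set.mem_insert_iff, Set.mem_singleton_iff, not_or] at h
    exact hc (Equiv.swap_apply_of_ne_of_ne h.1 h.2), (Equiv.swap a b).bijective⟩⟩

section

variable {M : Submonoid (Function.End ℕ)} {X : Type*} [MulAction M X]

/-- `x` is fixed by every element of `M`. -/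
def IsFixed (M : Submonoid (Function.End ℕ)) {X : Type*} [MulAction M X] (x : X) : Prop :=
  ∀ m : M, m • x = x

theorem swapEnd_apply (hM : Pm ≤ M) (a b c : ℕ) : (swapEnd hM a b).1 c = Equiv.swap a b c := rfl

theorem coe_mul_apply (m n : M) (c : ℕ) : (m * n).1 c = m.1 (n.1 c) := rfl

theorem swapEnd_smul_self (hM : Pm ≤ M) (a b : ℕ) (x : X) : swapEnd hM a b • swapEnd hM a b • x = x := by
  have h : swapEnd hM a b * swapEnd hM a b = 1 :=
    Subtype.ext (funext fun c => Equiv.swap_apply_self a b c)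
  rw [smul_smul, h, one_smul]

theorem supports_singleton_smul {a : ℕ} {x : X} (h : Supports M {a} x) (m : M) :
    Supports M {m.1 a} (m • x) := by
  intro m₁ m₂ h12
  rw [smul_smul, smul_smul]
  refine h _ _ fun c hc => ?_
  obtain rfl : c = a := hc
  exact h12 _ rfl

theorem fixed_of_supports_pair (hM : Pm ≤ M) {a b : ℕ} (hab : a ≠ b) {x : X} (ha : Supports M {a} x)
    (hb : Supports M {b} x) : IsFixed M x := by
  -- A transposition `(a c)` with `c ≠ b` agrees with the identity on `{b}`.
  have key : ∀ c, c ≠ b → swapEnd hM a c • x = x := by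
    intro c hc
    conv_rhs => rw [← one_smul M x]
    refine hb _ _ fun d hd => ?_
    obtain rfl : d = b := hd
    exact Equiv.swap_apply_of_ne_of_ne hab.symm hc.symm
  intro m
  have hm : m • x = swapEnd hM a (m.1 a) • x := by
    refine ha _ _ fun d hd => ?_
    obtain rfl : d = a := hd
    exact (Equiv.swap_apply_left _ _).symm
  rw [hm]
  by_cases hmb : m.1 a = b
  · rw [hmb]
    -- For a fresh atom `c`, `(a b) ∘ (a c)` agrees with `(a c)` on `{a}`.
    obtain ⟨c, hca, hcb⟩ : ∃ c : ℕ, c ≠ a ∧ c ≠ b := ⟨a + b + 1, by omega, by omega⟩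
    calc swapEnd hM a b • x = swapEnd hM a b • swapEnd hM a c • x := by rw [key c hcb]
      _ = swapEnd hM a c • x := by
        rw [smul_smul]
        refine ha _ _ fun d hd => ?_
        obtain rfl : d = a := hd
        rw [coe_mul_apply, swapEnd_apply, swapEnd_apply, Equiv.swap_apply_left,
          Equiv.swap_apply_of_ne_of_ne hca hcb]
      _ = x := key c hcb
  · exact key _ hmb

end

universe u

/-- For `M ∈ {Perm, Sb}` and a nominal `M`-set `X`: `dim(X) ≤ 1`
(every element has a support with at most one atom) iff `X` is isomorphic as an `M`-set
to `Y + ∐_{i ∈ I} 𝔸` for some sets `Y` and `I`, where `Y` carries the trivial action and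
each copy of the atoms `𝔸 = ℕ` the action `m • a = m a`. -/
theorem dim_le_one_iff_iso_discrete_sum_atoms (M : Submonoid (Function.End ℕ))
    (hM : M = Pm ∨ M = Sb) {X : Type u} [MulAction M X] (hX : IsNominal M X) :
    (∀ x : X, ∃ C : Set ℕ, C.Subsingleton ∧ Supports M C x) ↔
    ∃ (Y : Type u) (I : Type u) (e : X ≃ (Y ⊕ I × ℕ)),
      ∀ (m : M) (x : X),
        e (m • x) = Sum.map id (fun p : I × ℕ => (p.1, m.1 p.2)) (e x) := by
  have hP : Pm ≤ M := by
    rcases hM with rfl | rfl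
    · exact le_rfl
    · exact Pm_le_Sb
  constructor
  · intro h
    let Y : Type u := {x : X // IsFixed M x}
    let I : Type u := {x : X // ¬ IsFixed M x ∧ Supports M {0} x}
    let f : Y ⊕ I × ℕ → X := Sum.elim (fun y => y.1) (fun p => swapEnd hP 0 p.2 • p.1.1)
    have hfix : ∀ (i : I) (a : ℕ), ¬ IsFixed M (swapEnd hP 0 a • i.1) := by
      intro i a hf
      have h1 := hf (swapEnd hP 0 a)
      rw [swapEnd_smul_self] at h1
      rw [← h1] at hf
      exact i.2.1 hf
    have hsupp : ∀ (i : I) (a : ℕ), Supports M {a} (swapEnd hP 0 a • i.1) := by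
      intro i a
      have h1 := supports_singleton_smul i.2.2 (swapEnd hP 0 a)
      rwa [swapEnd_apply, Equiv.swap_apply_left] at h1
    have hf : Function.Bijective f := by
      constructor
      · rintro (y | ⟨i, a⟩) (z | ⟨j, b⟩) hyz
        · exact congrArg Sum.inl (Subtype.ext hyz)
        · have hyz' : y.1 = swapEnd hP 0 b • j.1 := hyz
          exact absurd (hyz' ▸ y.2) (hfix j b)
        · have hyz' : swapEnd hP 0 a • i.1 = z.1 := hyz
          exact absurd (hyz' ▸ z.2) (hfix i a)
        · have hyz' : swapEnd hP 0 a • i.1 = swapEnd hP 0 b • j.1 := hyz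
          have hab : a = b := by
            by_contra hne
            exact hfix i a (fixed_of_supports_pair hP hne (hsupp i a) (hyz' ▸ hsupp j b))
          subst hab
          have hij : i.1 = j.1 := by
            rw [← swapEnd_smul_self hP 0 a i.1, hyz', swapEnd_smul_self]
          obtain rfl : i = j := Subtype.ext hij
          rfl
      · intro x
        by_cases hx : IsFixed M x
        · exact ⟨Sum.inl ⟨x, hx⟩, rfl⟩
        · obtain ⟨C, hC, hCx⟩ := h x
          rcases hC.eq_empty_or_singleton with rfl | ⟨a, rfl⟩
          · refine absurd (fun m => ?_) hx
            rw [hCx m 1 (fun a ha => ha.elim), one_smul]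
          · refine ⟨Sum.inr (⟨swapEnd hP 0 a • x, fun hf => ?_, ?_⟩, a),
              swapEnd_smul_self hP 0 a x⟩
            · have h1 := hf (swapEnd hP 0 a)
              rw [swapEnd_smul_self] at h1
              rw [← h1] at hf
              exact hx hf
            · have h1 := supports_singleton_smul hCx (swapEnd hP 0 a)
              rwa [swapEnd_apply, Equiv.swap_apply_right] at h1
    have hequiv : ∀ (m : M) (s : Y ⊕ I × ℕ),
        m • f s = f (Sum.map id (fun p : I × ℕ => (p.1, m.1 p.2)) s) := by
      rintro m (y | ⟨i, a⟩)
      · exact y.2 m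
      · change m • swapEnd hP 0 a • i.1 = swapEnd hP 0 (m.1 a) • i.1
        rw [smul_smul]
        refine i.2.2 _ _ fun c hc => ?_
        obtain rfl : c = 0 := hc
        rw [coe_mul_apply, swapEnd_apply, swapEnd_apply, Equiv.swap_apply_left,
          Equiv.swap_apply_left]
    let e := Equiv.ofBijective f hf
    refine ⟨Y, I, e.symm, fun m x => ?_⟩
    rw [Equiv.symm_apply_eq]
    have h1 := hequiv m (e.symm x)
    have h2 : f (e.symm x) = x := e.apply_symm_apply x
    rw [h2] at h1
    exact h1
  · rintro ⟨Y, I, e, he⟩ x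
    rcases hx : e x with y | ⟨i, a⟩
    · refine ⟨∅, Set.subsingleton_empty, fun m₁ m₂ _ => e.injective ?_⟩
      rw [he, he, hx]
      rfl
    · refine ⟨{a}, Set.subsingleton_singleton, fun m₁ m₂ h12 => e.injective ?_⟩
      rw [he, he, hx]
      simp only [Sum.map_inr, h12 a rfl]
end

section
/- Let M ∈ {Perm, Sb} and let Σ, O be nominal M-sets. The nominal M-set Σ* →M O of finitely supported functions (the exponent in nominal M-sets) carries a B_M-coalgebra structure ζ making it a final B_M-coalgebra, where B_M(X) = O × (Σ →M X); concretely, for every B_M-coalgebra, i.e., nominal M-set Q with equivariant o : Q → O and δ : Q × Σ → Q, the transpose l♭ : Q → (Σ* →M O) of the language semantics l (defined by l(x, ε) = o(x) and l(x, aw) = l(δ(x, a), w)) is the unique B_M-coalgebra homomorphism from (Q, ⟨o, δ♭⟩) to (Σ* →M O, ζ). -/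
/-- The letterwise action on words. -/
instance List.instMulActionOfSubstitutions {M : Submonoid (Function.End ℕ)} {X : Type*}
    [MulAction M X] : MulAction M (List X) where
  smul m l := l.map (m • ·)
  one_smul l := by
    show l.map _ = l
    simp
  mul_smul m n l := by
    show l.map _ = (l.map _).map _
    simp [mul_smul]

/-- The language semantics of a Moore automaton:
`l(q, ε) = o(q)` and `l(q, aw) = l(δ(q, a), w)`. -/
def lang {Q A O : Type*} (δ : Q → A → Q) (o : Q → O) : Q → List A → O
  | q, [] => o q
  | q, a :: w => lang δ o (δ q a) w

/-- The exponent of nominal `M`-sets: finitely supported elements of the exponent of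
`M`-sets, i.e. of equivariant functions `f : M × A → B`. -/
def MExp (M : Submonoid (Function.End ℕ)) (A B : Type*) [MulAction M A] [MulAction M B] :
    Type _ :=
  {f : M × A → B //
    (∀ (m n : M) (a : A), f (m * n, m • a) = m • f (n, a)) ∧
    ∃ C : Set ℕ, C.Finite ∧
      ∀ m₁ m₂ : M, (∀ a ∈ C, m₁.1 a = m₂.1 a) →
        ∀ (n : M) (a : A), f (n * m₁, a) = f (n * m₂, a)}

instance MExp.instMulAction (M : Submonoid (Function.End ℕ)) (A B : Type*)
    [MulAction M A] [MulAction M B] : MulAction M (MExp M A B) where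
  smul m f := ⟨fun p => f.1 (p.1 * m, p.2), by
    constructor
    · intro m' n a
      have := f.2.1 m' (n * m) a
      simpa [mul_assoc] using this
    · obtain ⟨C, hC, hsup⟩ := f.2.2
      refine ⟨m.1 '' C, hC.image _, ?_⟩
      intro m₁ m₂ hag n a
      show f.1 (n * m₁ * m, a) = f.1 (n * m₂ * m, a)
      rw [mul_assoc, mul_assoc]
      exact hsup (m₁ * m) (m₂ * m)
        (fun b hb => hag (m.1 b) ⟨b, hb, rfl⟩) n a⟩
  one_smul f := Subtype.ext (funext fun p => by show f.1 (p.1 * 1, p.2) = f.1 p; rw [mul_one])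
  mul_smul m m' f := Subtype.ext (funext fun p => by
    show f.1 (p.1 * (m * m'), p.2) = f.1 (p.1 * m * m', p.2)
    rw [mul_assoc])

universe u

/-- Evaluation of a language at the empty word. -/
def expOut (M : Submonoid (Function.End ℕ)) {A O : Type*} [MulAction M A] [MulAction M O]
    (f : MExp M (List A) O) : O := f.1 (1, [])

/-- The derivative of a language with respect to a letter. Since `f` is viewed as a function on
`M × List A`, the letter is transported along the first argument. -/
def expDeriv {M : Submonoid (Function.End ℕ)} {A O : Type*} [MulAction M A] [MulAction M O]
    (hA : IsNominal M A) (f : MExp M (List A) O) (a : A) : MExp M (List A) O :=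
  ⟨fun p => f.1 (p.1, (p.1 • a) :: p.2), by
    constructor
    · intro m n w
      have h := f.2.1 m n ((n • a) :: w)
      rw [← h]
      show f.1 (m * n, ((m * n) • a) :: m • w) = f.1 (m * n, (m • n • a) :: m • w)
      rw [mul_smul]
    · obtain ⟨C, hC, hf⟩ := f.2.2
      obtain ⟨D, hD, ha⟩ := hA a
      refine ⟨C ∪ D, hC.union hD, fun m₁ m₂ h n w => ?_⟩
      show f.1 (n * m₁, ((n * m₁) • a) :: w) = f.1 (n * m₂, ((n * m₂) • a) :: w)
      rw [mul_smul, mul_smul, ha m₁ m₂ fun b hb => h b (Or.inr hb)]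
      exact hf m₁ m₂ (fun b hb => h b (Or.inl hb)) n _⟩

theorem lang_smul {M : Submonoid (Function.End ℕ)} {Q A O : Type*} [MulAction M Q]
    [MulAction M A] [MulAction M O] {o : Q → O} {δ : Q → A → Q} (ho : Equivariant M o)
    (hδ : Equivariant M (fun p : Q × A => δ p.1 p.2)) (m : M) (q : Q) (w : List A) :
    lang δ o (m • q) (m • w) = m • lang δ o q w := by
  induction w generalizing q with
  | nil => exact ho m q
  | cons a w ih =>
    show lang δ o (δ (m • q) (m • a)) (m • w) = m • lang δ o (δ q a) w
    rw [← ih, ← show δ (m • q) (m • a) = m • δ q a from hδ m (q, a)]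

/-- The transpose `l♭` of the language semantics. -/
def langTranspose {M : Submonoid (Function.End ℕ)} {Q A O : Type*} [MulAction M Q]
    [MulAction M A] [MulAction M O] (hQ : IsNominal M Q) {o : Q → O} {δ : Q → A → Q}
    (ho : Equivariant M o) (hδ : Equivariant M (fun p : Q × A => δ p.1 p.2)) (q : Q) :
    MExp M (List A) O :=
  ⟨fun p => lang δ o (p.1 • q) p.2, by
    constructor
    · intro m n w
      show lang δ o ((m * n) • q) (m • w) = m • lang δ o (n • q) w
      rw [mul_smul, lang_smul ho hδ]
    · obtain ⟨C, hC, hq⟩ := hQ q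
      refine ⟨C, hC, fun m₁ m₂ h n w => ?_⟩
      show lang δ o ((n * m₁) • q) w = lang δ o ((n * m₂) • q) w
      rw [mul_smul, mul_smul, hq m₁ m₂ h]⟩

theorem hom_eq_lang {M : Submonoid (Function.End ℕ)} {Q A O : Type*} [MulAction M Q]
    [MulAction M A] [MulAction M O] (hA : IsNominal M A) {o : Q → O} {δ : Q → A → Q}
    {k : Q → MExp M (List A) O} (hk : Equivariant M k) (hko : ∀ q, expOut M (k q) = o q)
    (hkδ : ∀ q a, k (δ q a) = expDeriv hA (k q) a) (q : Q) (m : M) (w : List A) :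
    (k q).1 (m, w) = lang δ o (m • q) w := by
  have key : ∀ (w : List A) (q : Q), (k q).1 (1, w) = lang δ o q w := by
    intro w
    induction w with
    | nil => exact hko
    | cons a w ih =>
      intro q
      show _ = lang δ o (δ q a) w
      rw [← ih, hkδ]
      show _ = (k q).1 (1, ((1 : M) • a) :: w)
      rw [one_smul]
  rw [← key, hk]
  show _ = (k q).1 (1 * m, w)
  rw [one_mul]

/-- For `M ∈ {Perm, Sb}` and nominal `M`-sets `Σ = A`, `O`, the nominal
`M`-set `Σ* →M O` (the exponent of nominal `M`-sets) carries a `B_M`-coalgebra structure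
`ζ = ⟨ζo, ζδ⟩` (for `B_M X = O × (Σ →M X)`) making it final: for every `B_M`-coalgebra,
i.e. nominal `M`-set `Q` with equivariant `o : Q → O` and `δ : Q × Σ → Q`, the transpose
`l♭` of the language semantics `l` is the unique coalgebra homomorphism into it. -/
theorem exponent_is_final_coalgebra (M : Submonoid (Function.End ℕ))
    (hM : M = Pm ∨ M = Sb) {A O : Type*} [MulAction M A] [MulAction M O]
    (hA : IsNominal M A) (hO : IsNominal M O) :
    IsNominal M (MExp M (List A) O) ∧
    ∃ (ζo : MExp M (List A) O → O)
      (ζδ : MExp M (List A) O → A → MExp M (List A) O),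
      Equivariant M ζo ∧
      Equivariant M (fun p : MExp M (List A) O × A => ζδ p.1 p.2) ∧
      ∀ (Q : Type u) [MulAction M Q], IsNominal M Q →
        ∀ (o : Q → O) (δ : Q → A → Q), Equivariant M o →
          Equivariant M (fun p : Q × A => δ p.1 p.2) →
          (∃! k : Q → MExp M (List A) O,
            Equivariant M k ∧ (∀ q : Q, ζo (k q) = o q) ∧
            (∀ (q : Q) (a : A), k (δ q a) = ζδ (k q) a)) ∧
          (∀ k : Q → MExp M (List A) O,
            Equivariant M k → (∀ q : Q, ζo (k q) = o q) →
            (∀ (q : Q) (a : A), k (δ q a) = ζδ (k q) a) →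
            ∀ (q : Q) (m : M) (w : List A), (k q).1 (m, w) = lang δ o (m • q) w) := by
  refine ⟨fun f => ?_, expOut M, expDeriv hA, ?_, ?_, ?_⟩
  · obtain ⟨C, hC, hf⟩ := f.2.2
    exact ⟨C, hC, fun m₁ m₂ h => Subtype.ext (funext fun p => hf m₁ m₂ h p.1 p.2)⟩
  · intro m f
    show f.1 (1 * m, []) = m • f.1 (1, [])
    rw [← f.2.1, one_mul, mul_one]
    rfl
  · rintro m ⟨f, a⟩
    refine Subtype.ext (funext fun p => ?_)
    show f.1 (p.1 * m, (p.1 • m • a) :: p.2) = f.1 (p.1 * m, ((p.1 * m) • a) :: p.2)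
    rw [mul_smul]
  · intro Q _ hQ o δ ho hδ
    refine ⟨⟨langTranspose hQ ho hδ, ⟨?_, ?_, ?_⟩, ?_⟩,
      fun k hk hko hkδ => hom_eq_lang hA hk hko hkδ⟩
    · intro m q
      refine Subtype.ext (funext fun p => ?_)
      show lang δ o (p.1 • m • q) p.2 = lang δ o ((p.1 * m) • q) p.2
      rw [mul_smul]
    · intro q
      show o ((1 : M) • q) = o q
      rw [one_smul]
    · intro q a
      refine Subtype.ext (funext fun p => ?_)
      show lang δ o (p.1 • δ q a) p.2 = lang δ o (δ (p.1 • q) (p.1 • a)) p.2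
      rw [← show δ (p.1 • q) (p.1 • a) = p.1 • δ q a from hδ p.1 (q, a)]
    · rintro k ⟨hk, hko, hkδ⟩
      exact funext fun q => Subtype.ext (funext fun p => hom_eq_lang hA hk hko hkδ q p.1 p.2)
end
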